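/- Assume L/2 ≥ M ≥ r. Fix a subset S ⊆ {1,…,M}; for M+1 ≤ l ≤ L let Y_l = (x_l, (x_{l−s})_{s∈S}), let ν denote the marginal of the stationary window distribution μ̄ corresponding to Y, and assume ν is entrywise positive. Then the expected χ²-divergence of the empirical window distribution from ν satisfies E_{X∼p}[ D_{χ²}( (L−M)^{−1} Σ_{l=M+1}^{L} δ_{Y_l} ‖ ν ) ] ≤ ( 4(1−λ)^{−1}√(D₀+1) + 16M ) / ( L · min_E ν(E) ), where δ_{Y_l} is the point mass at the (random) window Y_l, so the first argument is the empirical distribution of Y_{M+1},…,Y_L. -/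

import Mathlib

open Finset

/-- Probability of the full sequence `x` (tokens indexed `0,…,T-1`, i.e. `x_1,…,x_T`)
under the `n`-gram Markov chain with parent offsets `r`, transition kernel `pk`,
and initial distribution `init` on the first `R` tokens. -/
noncomputable def ngramProb (d n R T : ℕ) (r : Fin n → ℕ)
    (pk : (Fin n → Fin d) → Fin d → ℝ) (init : (Fin R → Fin d) → ℝ)
    (hRT : R ≤ T) (x : Fin T → Fin d) : ℝ :=
  init (fun i => x ⟨i.1, lt_of_lt_of_le i.2 hRT⟩) *
    ∏ l ∈ (Finset.Ico R T).attach,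
      pk (fun k => x ⟨l.1 - r k, lt_of_le_of_lt (Nat.sub_le _ _) (Finset.mem_Ico.mp l.2).2⟩)
        (x ⟨l.1, (Finset.mem_Ico.mp l.2).2⟩)

/-- The window transition matrix `P_π` on `𝒳^R` of the `n`-gram chain:
`P(Z', Z) = π(z'_R | Z parents) · 1{Z' is the shift of Z}`. -/
noncomputable def windowMatrix (d n R : ℕ) (hR : 0 < R) (r : Fin n → ℕ)
    (hrpos : ∀ k, 0 < r k) (pk : (Fin n → Fin d) → Fin d → ℝ) :
    Matrix (Fin R → Fin d) (Fin R → Fin d) ℝ :=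
  Matrix.of fun Z' Z =>
    if ∀ j : Fin (R - 1),
        Z' ⟨j.1, lt_of_lt_of_le j.2 (Nat.sub_le R 1)⟩ = Z ⟨j.1 + 1, by have := j.2; omega⟩ then
      pk (fun k => Z ⟨R - r k, Nat.sub_lt hR (hrpos k)⟩) (Z' ⟨R - 1, Nat.sub_lt hR Nat.one_pos⟩)
    else 0

/-- The matrix `K - √μ (√μ)ᵀ` where `K = diag(√μ)⁻¹ P_π diag(√μ)`. -/
noncomputable def specA (d n R : ℕ) (hR : 0 < R) (r : Fin n → ℕ) (hrpos : ∀ k, 0 < r k)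
    (pk : (Fin n → Fin d) → Fin d → ℝ) (μ : (Fin R → Fin d) → ℝ) :
    Matrix (Fin R → Fin d) (Fin R → Fin d) ℝ :=
  (Matrix.diagonal fun Z => (Real.sqrt (μ Z))⁻¹) * windowMatrix d n R hR r hrpos pk *
      (Matrix.diagonal fun Z => Real.sqrt (μ Z)) -
    Matrix.vecMulVec (fun Z => Real.sqrt (μ Z)) (fun Z => Real.sqrt (μ Z))

/-- The tuple `(x_{l0-s})_{s ∈ S}` of tokens at offsets `S` before position `l0` (0-based). -/
def parents (d T : ℕ) (S : Finset ℕ) (x : Fin T → Fin d) (l0 : ℕ) (hl : l0 < T) :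
    {s // s ∈ S} → Fin d :=
  fun s => x ⟨l0 - s.1, lt_of_le_of_lt (Nat.sub_le _ _) hl⟩

/-- The window `Y_{l0} = (x_{l0}, (x_{l0-s})_{s ∈ S})` (0-based position `l0`). -/
def window (d T : ℕ) (S : Finset ℕ) (x : Fin T → Fin d) (l0 : ℕ) (hl : l0 < T) :
    Fin d × ({s // s ∈ S} → Fin d) :=
  (x ⟨l0, hl⟩, parents d T S x l0 hl)

/-- The law of the window `Y_{l0}` when the full sequence is distributed as `q`. -/
noncomputable def windowLaw (d T : ℕ) (S : Finset ℕ) (q : (Fin T → Fin d) → ℝ)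
    (l0 : ℕ) (hl : l0 < T) (w : Fin d × ({s // s ∈ S} → Fin d)) : ℝ :=
  ∑ x : Fin T → Fin d, if window d T S x l0 hl = w then q x else 0

/-- Total variation distance: half the ℓ₁ distance. -/
noncomputable def tvDist {α : Type*} [Fintype α] (p q : α → ℝ) : ℝ :=
  (∑ w, |p w - q w|) / 2

/-- χ²-divergence `D_{χ²}(p ‖ q) = Σ_ω (p ω - q ω)² / q ω`. -/
noncomputable def chiSq {α : Type*} [Fintype α] (p q : α → ℝ) : ℝ :=
  ∑ w, (p w - q w) ^ 2 / q w

theorem icoLtSucc {M L : ℕ} (l : {m // m ∈ Finset.Ico M L}) : l.1 < L + 1 :=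
  Nat.lt_succ_of_lt (Finset.mem_Ico.mp l.2).2

/-!
Since `ν ≥ m`, the divergence of the empirical law of `N` windows from `ν` is at most `1/m` times
its squared `ℓ²` distance to `ν`, hence at most `(m N²)⁻¹ ∑ᵢⱼ corr ν Yᵢ Yⱼ`, where `corr` is the
inner product of the centred point masses. Two windows that overlap contribute at most `2`. For
disjoint windows, the Markov property replaces the later one by its conditional mean given the last
`R` symbols of the earlier one. This mean is a centred function pushed back `t` steps by the window
chain, and the spectral gap shrinks it by `λᵗ` in `ℓ²(μ)`. The chain is started from `μ₀` rather
than `μ`, which one Cauchy–Schwarz inequality absorbs at the price of `√(D₀ + 1)`. Each row of the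
double sum is thus dominated by a plateau followed by two-sided geometric tails.
-/

section Decay

/-! ### Double sums with off-diagonal decay -/

variable {ι : Type*}

lemma sum_comp_le_tsum {φ : ℕ → ℝ} (hφ : Summable φ) (hφ0 : ∀ t, 0 ≤ φ t)
    {s : Finset ι} {g : ι → ℕ} (hg : Set.InjOn g s) : ∑ j ∈ s, φ (g j) ≤ ∑' t, φ t := by
  rw [← sum_image (f := φ) hg]
  exact hφ.sum_le_tsum _ fun t _ ↦ hφ0 t

lemma sum_comp_dist_le_two_mul_tsum [Fintype ι] {φ : ℕ → ℝ} (hφ : Summable φ) (hφ0 : ∀ t, 0 ≤ φ t)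
    {a : ι → ℕ} (ha : Function.Injective a) (k : ℕ) :
    ∑ j, φ (k.dist (a j)) ≤ 2 * ∑' t, φ t := by
  rw [← sum_filter_add_sum_filter_not univ (a · ≤ k), two_mul]
  refine add_le_add (sum_comp_le_tsum hφ hφ0 ?_) (sum_comp_le_tsum hφ hφ0 ?_) <;>
  · intro i hi j hj hij
    simp only [mem_coe, mem_filter, mem_univ, true_and, not_le] at hi hj
    simp only [Nat.dist] at hij
    exact ha (by omega)

lemma hasSum_plateau_geometric {lam : ℝ} (h0 : 0 ≤ lam) (h1 : lam < 1) (K : ℕ) (b C : ℝ) :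
    HasSum (fun t ↦ if t < K then b else C * lam ^ (t - K)) (K * b + C * (1 - lam)⁻¹) := by
  rw [← hasSum_nat_add_iff' K]
  have hplateau : ∑ t ∈ range K, (if t < K then b else C * lam ^ (t - K)) = K * b := by
    rw [sum_congr rfl fun t ht ↦ if_pos (mem_range.mp ht), sum_const, card_range, nsmul_eq_mul]
  rw [hplateau, add_sub_cancel_left]
  simpa using (hasSum_geometric_of_lt_one h0 h1).mul_left C

theorem sum_sum_le_of_decay [Fintype ι] {a : ι → ℕ} (ha : Function.Injective a) {c : ι → ι → ℝ}
    {lam b C : ℝ} {K : ℕ} (h0 : 0 ≤ lam) (h1 : lam < 1) (hb : 0 ≤ b) (hC : 0 ≤ C)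
    (hsymm : ∀ i j, c i j = c j i) (hnear : ∀ i j, c i j ≤ b)
    (hfar : ∀ i j, a i + K ≤ a j → c i j ≤ C * lam ^ (a j - (a i + K))) :
    ∑ i, ∑ j, c i j ≤ Fintype.card ι * (2 * (K * b + C * (1 - lam)⁻¹)) := by
  set φ : ℕ → ℝ := fun t ↦ if t < K then b else C * lam ^ (t - K) with hφ
  have hsum : HasSum φ (K * b + C * (1 - lam)⁻¹) := hasSum_plateau_geometric h0 h1 K b C
  have hφ0 (t : ℕ) : 0 ≤ φ t := by
    simp only [hφ]
    split_ifs <;> positivity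
  have hle_of_le (i j : ι) (hij : a i ≤ a j) : c i j ≤ φ ((a i).dist (a j)) := by
    rw [Nat.dist_eq_sub_of_le hij]
    rcases lt_or_ge (a j - a i) K with h | h
    · simpa only [hφ, if_pos h] using hnear i j
    · simpa only [hφ, if_neg h.not_gt, Nat.sub_sub] using hfar i j (by omega)
  have hle (i j : ι) : c i j ≤ φ ((a i).dist (a j)) := by
    rcases le_total (a i) (a j) with hij | hij
    · exact hle_of_le i j hij
    · rw [hsymm, Nat.dist_comm]
      exact hle_of_le j i hij
  have hrow (i : ι) : ∑ j, c i j ≤ 2 * (K * b + C * (1 - lam)⁻¹) := by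
    refine (sum_le_sum fun j _ ↦ hle i j).trans ?_
    rw [← hsum.tsum_eq]
    exact sum_comp_dist_le_two_mul_tsum hsum.summable hφ0 ha (a i)
  calc ∑ i, ∑ j, c i j ≤ ∑ _i : ι, 2 * (K * b + C * (1 - lam)⁻¹) := sum_le_sum fun i _ ↦ hrow i
    _ = Fintype.card ι * (2 * (K * b + C * (1 - lam)⁻¹)) := by
      rw [sum_const, card_univ, nsmul_eq_mul]

end Decay

section EmpiricalDistribution

/-! ### The chi-square divergence of an empirical distribution -/

open scoped Matrix

variable {X W ι : Type*}

section

variable [Fintype W]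

lemma dotProduct_self_le_one {ν : W → ℝ} (hν0 : ∀ w, 0 ≤ ν w) (hν1 : ∑ w, ν w = 1) :
    ν ⬝ᵥ ν ≤ 1 := by
  rw [← hν1]
  refine sum_le_sum fun w _ ↦ mul_le_of_le_one_left (hν0 w) ?_
  exact hν1 ▸ single_le_sum (fun w _ ↦ hν0 w) (mem_univ w)

lemma chiSq_le_inv_mul_dotProduct {p ν : W → ℝ} {m : ℝ} (hm : 0 < m) (hν : ∀ w, m ≤ ν w) :
    chiSq p ν ≤ m⁻¹ * ((p - ν) ⬝ᵥ (p - ν)) := by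
  rw [chiSq, dotProduct, mul_sum]
  refine sum_le_sum fun w _ ↦ ?_
  rw [Pi.sub_apply, ← sq, div_eq_inv_mul]
  gcongr
  exact hν w

end

variable [DecidableEq W]

section

variable [Fintype ι]

/-- The empirical distribution of a finite family of observations `y`. -/
noncomputable def empiricalLaw (y : ι → W) (w : W) : ℝ :=
  (∑ i, if y i = w then 1 else 0) / Fintype.card ι

lemma empiricalLaw_sub [Nonempty ι] (y : ι → W) (ν : W → ℝ) :
    empiricalLaw y - ν = (Fintype.card ι : ℝ)⁻¹ • ∑ i, (Pi.single (y i) 1 - ν) := by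
  ext w
  simp only [empiricalLaw, Pi.sub_apply, Pi.smul_apply, Finset.sum_apply, smul_eq_mul,
    Pi.single_apply, eq_comm (a := w)]
  rw [sum_sub_distrib, sum_const, card_univ, nsmul_eq_mul]
  field_simp

end

variable [Fintype X]

/-- The law of `ψ x` when `x` has law `p`; `windowLaw` is the case where `ψ` reads off a
window. -/
def mapLaw (p : X → ℝ) (ψ : X → W) (w : W) : ℝ :=
  ∑ x, if ψ x = w then p x else 0

lemma mapLaw_nonneg {p : X → ℝ} (hp : ∀ x, 0 ≤ p x) (ψ : X → W) (w : W) : 0 ≤ mapLaw p ψ w :=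
  sum_nonneg fun x _ ↦ by split_ifs <;> [exact hp x; rfl]

variable [Fintype W]

lemma mapLaw_dotProduct (p : X → ℝ) (ψ : X → W) (φ : W → ℝ) :
    mapLaw p ψ ⬝ᵥ φ = p ⬝ᵥ (φ ∘ ψ) := by
  simp only [dotProduct, mapLaw, sum_mul, ite_mul, zero_mul, Function.comp_apply]
  rw [sum_comm]
  simp only [sum_ite_eq, mem_univ, if_true]

lemma sum_mapLaw (p : X → ℝ) (ψ : X → W) : ∑ w, mapLaw p ψ w = ∑ x, p x := by
  simpa only [dotProduct_one, Pi.one_comp] using mapLaw_dotProduct p ψ 1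

/-- The inner product of the centred point masses at `a` and `b`: the contribution to the squared
`ℓ²` distance between an empirical distribution and `ν` of a pair of observations `a`, `b`. -/
def corr (ν : W → ℝ) (a b : W) : ℝ :=
  (Pi.single a 1 - ν) ⬝ᵥ (Pi.single b 1 - ν)

lemma corr_comm (ν : W → ℝ) (a b : W) : corr ν a b = corr ν b a :=
  dotProduct_comm _ _

lemma corr_eq (ν : W → ℝ) (a b : W) :
    corr ν a b = (if a = b then 1 else 0) - ν a - ν b + ν ⬝ᵥ ν := by
  simp only [corr, sub_dotProduct, dotProduct_sub, single_one_dotProduct, dotProduct_single_one,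
    Pi.sub_apply, Pi.single_apply, eq_comm (a := b)]
  ring

/-- The indicator of `w`, centred at its mean `ν w` under `ν`. -/
def centredIndicator (ν : W → ℝ) (w a : W) : ℝ :=
  (Pi.single a 1 - ν : W → ℝ) w

lemma corr_eq_sum_centredIndicator (ν : W → ℝ) (a b : W) :
    corr ν a b = ∑ w, centredIndicator ν w a * centredIndicator ν w b :=
  rfl

lemma dotProduct_centredIndicator {ν : W → ℝ} (hν1 : ∑ w, ν w = 1) (w : W) :
    ν ⬝ᵥ centredIndicator ν w = 0 := by
  simp only [dotProduct, centredIndicator, Pi.sub_apply, mul_sub, sum_sub_distrib, ← sum_mul, hν1,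
    Pi.single_apply, mul_ite, mul_one, mul_zero, sum_ite_eq, mem_univ, if_true, one_mul, sub_self]

lemma corr_le {ν : W → ℝ} (hν0 : ∀ w, 0 ≤ ν w) (a b : W) : corr ν a b ≤ 1 + ν ⬝ᵥ ν := by
  rw [corr_eq]
  split_ifs <;> linarith [hν0 a, hν0 b]

lemma dotProduct_corr_self {ν : W → ℝ} (hν1 : ∑ w, ν w = 1) :
    ν ⬝ᵥ (fun w ↦ corr ν w w) = 1 - ν ⬝ᵥ ν := by
  have hexpand (w : W) : ν w * corr ν w w = ν w * (1 + ν ⬝ᵥ ν) - 2 * (ν w * ν w) := by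
    rw [corr_eq, if_pos rfl]
    ring
  simp only [dotProduct, hexpand, sum_sub_distrib, ← sum_mul, ← mul_sum, hν1]
  ring

variable [Fintype ι]

lemma chiSq_empiricalLaw_le [Nonempty ι] {ν : W → ℝ} {m : ℝ} (hm : 0 < m) (hν : ∀ w, m ≤ ν w)
    (y : ι → W) :
    chiSq (empiricalLaw y) ν ≤
      (m * Fintype.card ι ^ 2)⁻¹ * ∑ i, ∑ j, corr ν (y i) (y j) := by
  refine (chiSq_le_inv_mul_dotProduct hm hν).trans_eq ?_
  simp only [empiricalLaw_sub, smul_dotProduct, dotProduct_smul, corr, smul_eq_mul]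
  rw [sum_dotProduct]
  simp only [dotProduct_sum]
  ring

lemma dotProduct_chiSq_empiricalLaw_le [Nonempty ι] {p : X → ℝ} (hp : ∀ x, 0 ≤ p x) {ν : W → ℝ}
    {m : ℝ} (hm : 0 < m) (hν : ∀ w, m ≤ ν w) (Y : ι → X → W) :
    p ⬝ᵥ (fun x ↦ chiSq (empiricalLaw fun i ↦ Y i x) ν) ≤
      (m * Fintype.card ι ^ 2)⁻¹ * ∑ i, ∑ j, p ⬝ᵥ (fun x ↦ corr ν (Y i x) (Y j x)) := by
  calc _ ≤ p ⬝ᵥ fun x ↦ (m * Fintype.card ι ^ 2)⁻¹ * ∑ i, ∑ j, corr ν (Y i x) (Y j x) :=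
        sum_le_sum fun x _ ↦
          mul_le_mul_of_nonneg_left (chiSq_empiricalLaw_le hm hν fun i ↦ Y i x) (hp x)
    _ = _ := by
        simp only [dotProduct, mul_sum]
        rw [sum_comm]
        refine sum_congr rfl fun i _ ↦ ?_
        rw [sum_comm]
        exact sum_congr rfl fun j _ ↦ sum_congr rfl fun x _ ↦ by ring

end EmpiricalDistribution

section StochasticMatrix

/-! ### Spectral contraction of a finite Markov chain -/

open Matrix
open scoped Matrix.Norms.L2Operator

variable {Ω W : Type*} [Fintype Ω]

lemma dotProduct_sq_le {p h : Ω → ℝ} (hp0 : ∀ Z, 0 ≤ p Z) (hp1 : ∑ Z, p Z = 1) :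
    (p ⬝ᵥ h) ^ 2 ≤ p ⬝ᵥ h ^ 2 :=
  Real.pow_arith_mean_le_arith_mean_pow_of_even univ p h (fun Z _ ↦ hp0 Z) hp1 even_two

lemma dotProduct_le_sqrt_chiSq_mul_sqrt {μ μ0 : Ω → ℝ} (hμ : ∀ Z, 0 < μ Z) (hμ1 : ∑ Z, μ Z = 1)
    (hμ01 : ∑ Z, μ0 Z = 1) (h : Ω → ℝ) :
    μ0 ⬝ᵥ h ≤ √(chiSq μ0 μ + 1) * √(μ ⬝ᵥ h ^ 2) := by
  have hchi : chiSq μ0 μ + 1 = ∑ Z, (μ0 Z / √(μ Z)) ^ 2 := by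
    have hterm (Z : Ω) : (μ0 Z - μ Z) ^ 2 / μ Z = (μ0 Z / √(μ Z)) ^ 2 - 2 * μ0 Z + μ Z := by
      rw [div_pow, Real.sq_sqrt (hμ Z).le]
      field_simp [(hμ Z).ne']
      ring
    simp only [chiSq, hterm, sum_add_distrib, sum_sub_distrib, ← mul_sum, hμ1, hμ01]
    ring
  have hnorm : μ ⬝ᵥ h ^ 2 = ∑ Z, (√(μ Z) * h Z) ^ 2 :=
    sum_congr rfl fun Z _ ↦ by rw [mul_pow, Real.sq_sqrt (hμ Z).le, Pi.pow_apply]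
  have hsplit : μ0 ⬝ᵥ h = ∑ Z, μ0 Z / √(μ Z) * (√(μ Z) * h Z) :=
    sum_congr rfl fun Z _ ↦ by
      rw [← mul_assoc, div_mul_cancel₀ _ (Real.sqrt_pos.mpr (hμ Z)).ne']
  rw [hchi, hnorm, hsplit]
  exact Real.sum_mul_le_sqrt_mul_sqrt _ _ _

variable {P : Matrix Ω Ω ℝ} {μ : Ω → ℝ}

lemma dotProduct_vecMul_of_stationary (hstat : P *ᵥ μ = μ) (h : Ω → ℝ) :
    μ ⬝ᵥ (h ᵥ* P) = μ ⬝ᵥ h := by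
  rw [dotProduct_comm, ← dotProduct_mulVec, hstat, dotProduct_comm]

variable [DecidableEq Ω]

lemma vecMul_sq_le (hP : P ∈ colStochastic ℝ Ω) (h : Ω → ℝ) :
    (h ᵥ* P) ^ 2 ≤ h ^ 2 ᵥ* P := fun Z ↦ by
  simpa only [vecMul, Pi.pow_apply, dotProduct_comm _ fun Z' ↦ P Z' Z] using
    dotProduct_sq_le (h := h) (fun Z' ↦ hP.1 Z' Z) (sum_col_of_mem_colStochastic hP Z)

/-- The centred transition operator `diag(√μ)⁻¹ P diag(√μ) - √μ (√μ)ᵀ` of a chain with transition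
matrix `P` (columns summing to one) and stationary law `μ`; `specA` is its instance for the window
chain. -/
noncomputable def centredKernel (P : Matrix Ω Ω ℝ) (μ : Ω → ℝ) : Matrix Ω Ω ℝ :=
  (diagonal fun Z ↦ (√(μ Z))⁻¹) * P * (diagonal fun Z ↦ √(μ Z)) -
    vecMulVec (fun Z ↦ √(μ Z)) (fun Z ↦ √(μ Z))

lemma l2_opNorm_le_of_sqrt_sum_sq_le {A : Matrix Ω Ω ℝ} {lam : ℝ} (hlam : 0 ≤ lam)
    (hA : ∀ v : Ω → ℝ, √(∑ i, (A *ᵥ v) i ^ 2) ≤ lam * √(∑ i, v i ^ 2)) : ‖A‖ ≤ lam := by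
  rw [← l2_opNorm_toEuclideanCLM]
  refine ContinuousLinearMap.opNorm_le_bound _ hlam fun v ↦ ?_
  simpa only [EuclideanSpace.norm_eq, Real.norm_eq_abs, sq_abs, ofLp_toEuclideanCLM] using hA v

lemma vecMul_dotProduct_vecMul_le (A : Matrix Ω Ω ℝ) (v : Ω → ℝ) :
    (v ᵥ* A) ⬝ᵥ (v ᵥ* A) ≤ ‖A‖ ^ 2 * (v ⬝ᵥ v) := by
  have hle := l2_opNorm_mulVec Aᴴ (WithLp.toLp 2 v)
  rw [l2_opNorm_conjTranspose] at hle
  rw [conjTranspose_eq_transpose_of_trivial, mulVec_transpose] at hle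
  simpa only [mul_pow, EuclideanSpace.norm_sq_eq, Real.norm_eq_abs, sq_abs, dotProduct, ← sq,
    EuclideanSpace.equiv, PiLp.coe_symm_continuousLinearEquiv] using
    pow_le_pow_left₀ (norm_nonneg _) hle 2

lemma vecMul_sqrt_centredKernel (hμ : ∀ Z, 0 < μ Z)
    {h : Ω → ℝ} (hh : μ ⬝ᵥ h = 0) :
    (fun Z ↦ √(μ Z) * h Z) ᵥ* centredKernel P μ = fun Z ↦ √(μ Z) * (h ᵥ* P) Z := by
  have hdiag : (fun Z ↦ √(μ Z) * h Z) ᵥ* (diagonal fun Z ↦ (√(μ Z))⁻¹) = h := by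
    ext Z
    rw [vecMul_diagonal, mul_comm, inv_mul_cancel_left₀ (Real.sqrt_pos.mpr (hμ Z)).ne']
  have hcentred : (fun Z ↦ √(μ Z) * h Z) ⬝ᵥ (fun Z ↦ √(μ Z)) = 0 := by
    rw [← hh]
    exact sum_congr rfl fun Z _ ↦ by rw [mul_right_comm, Real.mul_self_sqrt (hμ Z).le]
  ext Z
  rw [centredKernel, vecMul_sub, ← vecMul_vecMul, ← vecMul_vecMul, hdiag, vecMul_vecMulVec,
    hcentred, zero_smul, sub_zero, vecMul_diagonal, mul_comm]

lemma dotProduct_vecMul_sq_le (hμ : ∀ Z, 0 < μ Z) {lam : ℝ} (hnorm : ‖centredKernel P μ‖ ≤ lam)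
    {h : Ω → ℝ} (hh : μ ⬝ᵥ h = 0) :
    μ ⬝ᵥ (h ᵥ* P) ^ 2 ≤ lam ^ 2 * (μ ⬝ᵥ h ^ 2) := by
  have hnorm_sq (k : Ω → ℝ) :
      (fun Z ↦ √(μ Z) * k Z) ⬝ᵥ (fun Z ↦ √(μ Z) * k Z) = μ ⬝ᵥ k ^ 2 :=
    sum_congr rfl fun Z _ ↦ by
      rw [mul_mul_mul_comm, Real.mul_self_sqrt (hμ Z).le, ← sq, Pi.pow_apply]
  have hcontract := vecMul_dotProduct_vecMul_le (centredKernel P μ) fun Z ↦ √(μ Z) * h Z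
  rw [vecMul_sqrt_centredKernel hμ hh, hnorm_sq, hnorm_sq] at hcontract
  refine hcontract.trans ?_
  gcongr
  rw [← hnorm_sq]
  exact sum_nonneg fun _ _ ↦ mul_self_nonneg _

lemma dotProduct_vecMul_pow_sq_le (hμ : ∀ Z, 0 < μ Z) (hstat : P *ᵥ μ = μ) {lam : ℝ}
    (hnorm : ‖centredKernel P μ‖ ≤ lam) {h : Ω → ℝ} (hh : μ ⬝ᵥ h = 0) (t : ℕ) :
    μ ⬝ᵥ (h ᵥ* P ^ t) = 0 ∧ μ ⬝ᵥ (h ᵥ* P ^ t) ^ 2 ≤ (lam ^ t) ^ 2 * (μ ⬝ᵥ h ^ 2) := by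
  induction t with
  | zero => simp [hh]
  | succ t ih =>
    rw [pow_succ, ← vecMul_vecMul]
    refine ⟨by rw [dotProduct_vecMul_of_stationary hstat, ih.1], ?_⟩
    calc μ ⬝ᵥ ((h ᵥ* P ^ t) ᵥ* P) ^ 2 ≤ lam ^ 2 * (μ ⬝ᵥ (h ᵥ* P ^ t) ^ 2) :=
          dotProduct_vecMul_sq_le hμ hnorm ih.1
      _ ≤ lam ^ 2 * ((lam ^ t) ^ 2 * (μ ⬝ᵥ h ^ 2)) := by gcongr; exact ih.2
      _ = (lam ^ (t + 1)) ^ 2 * (μ ⬝ᵥ h ^ 2) := by ring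

lemma pow_mulVec_of_stationary (hstat : P *ᵥ μ = μ) (q : ℕ) : P ^ q *ᵥ μ = μ := by
  induction q with
  | zero => rw [pow_zero, one_mulVec]
  | succ q ih => rw [pow_succ, ← mulVec_mulVec, hstat, ih]

variable [Fintype W]

theorem initial_dotProduct_vecMul_sqrt_sum_sq_le (hP : P ∈ colStochastic ℝ Ω)
    (hμ : ∀ Z, 0 < μ Z) (hμ1 : ∑ Z, μ Z = 1) (hstat : P *ᵥ μ = μ) {lam : ℝ}
    (hnorm : ‖centredKernel P μ‖ ≤ lam) {μ0 : Ω → ℝ} (hμ01 : ∑ Z, μ0 Z = 1)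
    {g : W → Ω → ℝ} (hg : ∀ w, μ ⬝ᵥ g w = 0) (q t : ℕ) :
    μ0 ⬝ᵥ ((fun Z ↦ √(∑ w, (g w ᵥ* P ^ t) Z ^ 2)) ᵥ* P ^ q) ≤
      √(chiSq μ0 μ + 1) * (lam ^ t * √(∑ w, μ ⬝ᵥ g w ^ 2)) := by
  set G : Ω → ℝ := fun Z ↦ √(∑ w, (g w ᵥ* P ^ t) Z ^ 2) with hG
  have hG_sq : μ ⬝ᵥ G ^ 2 = ∑ w, μ ⬝ᵥ (g w ᵥ* P ^ t) ^ 2 := by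
    simp only [dotProduct, hG, Pi.pow_apply, Real.sq_sqrt (sum_nonneg fun _ _ ↦ sq_nonneg _),
      mul_sum]
    rw [sum_comm]
  have hJensen : μ ⬝ᵥ (G ᵥ* P ^ q) ^ 2 ≤ μ ⬝ᵥ G ^ 2 := by
    rw [← dotProduct_vecMul_of_stationary (pow_mulVec_of_stationary hstat q) (G ^ 2)]
    exact sum_le_sum fun Z _ ↦
      mul_le_mul_of_nonneg_left (vecMul_sq_le (pow_mem hP q) G Z) (hμ Z).le
  have hlam : 0 ≤ lam := (norm_nonneg _).trans hnorm
  refine (dotProduct_le_sqrt_chiSq_mul_sqrt hμ hμ1 hμ01 _).trans ?_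
  gcongr
  calc √(μ ⬝ᵥ (G ᵥ* P ^ q) ^ 2) ≤ √(∑ w, μ ⬝ᵥ (g w ᵥ* P ^ t) ^ 2) :=
        Real.sqrt_le_sqrt (hJensen.trans_eq hG_sq)
    _ ≤ √((lam ^ t) ^ 2 * ∑ w, μ ⬝ᵥ g w ^ 2) := by
        rw [mul_sum]
        gcongr with w
        exact (dotProduct_vecMul_pow_sq_le hμ hstat hnorm (hg w) t).2
    _ = lam ^ t * √(∑ w, μ ⬝ᵥ g w ^ 2) := by
        rw [Real.sqrt_mul (sq_nonneg _), Real.sqrt_sq (pow_nonneg hlam t)]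

end StochasticMatrix

section Paths

/-! ### Resampling the coordinates of an infinite sequence -/

variable {α β ι : Type*}

/-- The block `x_j, …, x_{j+T-1}` of the sequence `x`. Sequences are indexed by all of `ℕ`, so that
blocks of a path need no bound on their position. -/
def block (T j : ℕ) (x : ℕ → α) : Fin T → α :=
  fun i ↦ x (j + i)

/-- The sequence `x` with its block of length `T` at position `j` replaced by `y`. -/
def overwrite {T : ℕ} (j : ℕ) (y : Fin T → α) (x : ℕ → α) : ℕ → α :=
  fun k ↦ if h : j ≤ k ∧ k < j + T then y ⟨k - j, by omega⟩ else x k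

@[simp]
lemma block_overwrite {T : ℕ} (j : ℕ) (y : Fin T → α) (x : ℕ → α) :
    block T j (overwrite j y x) = y := by
  ext i
  simp [block, overwrite]

lemma block_overwrite_zero {T L i : ℕ} (hi : i + T ≤ L) (y : Fin L → α) (x : ℕ → α) :
    block T i (overwrite 0 y x) = fun k : Fin T ↦ y ⟨i + k, by omega⟩ := by
  ext k
  simp [block, overwrite, show i + k < L by omega]

lemma overwrite_block (T j : ℕ) (x : ℕ → α) : overwrite j (block T j x) x = x := by
  ext k
  unfold overwrite block
  split_ifs with h
  · rw [Nat.add_sub_cancel' h.1]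
  · rfl

lemma overwrite_snoc {T : ℕ} (j : ℕ) (y : Fin T → α) (e : α) (x : ℕ → α) :
    overwrite j (Fin.snoc y e : Fin (T + 1) → α) x =
      Function.update (overwrite j y x) (j + T) e := by
  ext k
  simp only [overwrite, Fin.snoc, Function.update_apply]
  split_ifs <;> first | rfl | omega

lemma block_update (T j : ℕ) (x : ℕ → α) (e : α) :
    block T j (Function.update x (j + T) e) = block T j x := by
  ext i
  exact Function.update_of_ne (by omega) _ _

lemma tail_snoc_block (R j : ℕ) (x : ℕ → α) (e : α) :
    Fin.tail (Fin.snoc (block R j x) e : Fin (R + 1) → α) =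
      block R (j + 1) (Function.update x (j + R) e) := by
  ext i
  simp only [Fin.tail, Fin.snoc, block, Function.update_apply, Fin.val_succ, cast_eq,
    Fin.val_castLT]
  split_ifs <;> first | omega | congr 1; omega | rfl

lemma tail_snoc_eq_iff {R : ℕ} (hR : 0 < R) {Z Z' : Fin R → α} {e : α} :
    Fin.tail (Fin.snoc Z e : Fin (R + 1) → α) = Z' ↔
      (∀ j : Fin (R - 1), Z' ⟨j, by omega⟩ = Z ⟨j + 1, by omega⟩) ∧ Z' ⟨R - 1, by omega⟩ = e := by
  constructor
  · rintro rfl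
    refine ⟨fun j ↦ ?_, ?_⟩
    · simp [Fin.tail, Fin.snoc, show j.1 + 1 < R by omega]
    · simp [Fin.tail, Fin.snoc, Nat.sub_add_cancel hR]
  · rintro ⟨hshift, rfl⟩
    ext ⟨i, hi⟩
    rcases Nat.lt_or_ge (i + 1) R with hiR | hiR
    · simp [Fin.tail, Fin.snoc, hiR, hshift ⟨i, by omega⟩]
    · obtain rfl : i = R - 1 := by omega
      simp [Fin.tail, Fin.snoc, Nat.sub_add_cancel hR]

lemma dependsOn_comp_block {T j b : ℕ} (hb : j + T ≤ b) (φ : (Fin T → α) → β) :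
    DependsOn (φ ∘ block T j) (Set.Iio b) := fun x y hxy ↦
  congrArg φ <| funext fun i ↦ hxy (j + i) (Set.mem_Iio.mpr (by omega))

lemma update_comp_of_dependsOn {F : (ℕ → α) → β} {a l : ℕ} (hF : DependsOn F (Set.Iio a))
    (hal : a ≤ l) (x : ℕ → α) (e : α) : F (Function.update x l e) = F x :=
  hF fun _ hk ↦ Function.update_of_ne ((Set.mem_Iio.mp hk).trans_le hal).ne _ _

variable [Fintype α]

/-- The conditional expectation of `F` when coordinate `l` of the sequence is redrawn from the
kernel `κ` given the coordinates `l - r k`. -/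
def resampleAt (r : ι → ℕ) (κ : (ι → α) → α → ℝ) (l : ℕ) (F : (ℕ → α) → ℝ) (x : ℕ → α) : ℝ :=
  ∑ e, κ (fun k ↦ x (l - r k)) e * F (Function.update x l e)

/-- The conditional expectation of `F` when coordinates `a, …, a + k - 1` are redrawn one after
the other. -/
def resample (r : ι → ℕ) (κ : (ι → α) → α → ℝ) (a : ℕ) : ℕ → ((ℕ → α) → ℝ) → (ℕ → α) → ℝ
  | 0, F => F
  | k + 1, F => resample r κ a k (resampleAt r κ (a + k) F)

variable {r : ι → ℕ} {κ : (ι → α) → α → ℝ}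

lemma resample_add (a j k : ℕ) (F : (ℕ → α) → ℝ) :
    resample r κ a (j + k) F = resample r κ a j (resample r κ (a + j) k F) := by
  induction k generalizing F with
  | zero => rfl
  | succ k ih => rw [← add_assoc, resample, ih, resample, add_assoc]

lemma resample_mul_of_dependsOn {G : (ℕ → α) → ℝ} {a : ℕ} (hG : DependsOn G (Set.Iio a)) (k : ℕ)
    (F : (ℕ → α) → ℝ) : resample r κ a k (G * F) = G * resample r κ a k F := by
  induction k generalizing F with
  | zero => rfl
  | succ k ih =>
    have hlast : resampleAt r κ (a + k) (G * F) = G * resampleAt r κ (a + k) F := by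
      ext x
      simp only [resampleAt, Pi.mul_apply, update_comp_of_dependsOn hG (Nat.le_add_right a k),
        mul_sum, mul_left_comm]
    rw [resample, hlast, ih, resample]

lemma resample_of_dependsOn (hκ : ∀ Y, ∑ e, κ Y e = 1) {F : (ℕ → α) → ℝ} {a : ℕ}
    (hF : DependsOn F (Set.Iio a)) (k : ℕ) : resample r κ a k F = F := by
  induction k with
  | zero => rfl
  | succ k ih =>
    have hlast : resampleAt r κ (a + k) F = F := by
      ext x
      simp only [resampleAt, update_comp_of_dependsOn hF (Nat.le_add_right a k), ← sum_mul, hκ,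
        one_mul]
    rw [resample, hlast, ih]

end Paths

section NGram

/-! ### The Markov property of the `n`-gram chain -/

open Matrix

variable {d n R T T' : ℕ} {hR : 0 < R} {r : Fin n → ℕ} {hrpos : ∀ k, 0 < r k}
  {pk : (Fin n → Fin d) → Fin d → ℝ} {init : (Fin R → Fin d) → ℝ}

lemma ngramProb_nonneg (hpk : ∀ Y e, 0 ≤ pk Y e) (hinit : ∀ Z, 0 ≤ init Z) (hRT : R ≤ T)
    (y : Fin T → Fin d) : 0 ≤ ngramProb d n R T r pk init hRT y :=
  mul_nonneg (hinit _) (prod_nonneg fun _ _ ↦ hpk _ _)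

lemma ngramProb_self (y : Fin R → Fin d) : ngramProb d n R R r pk init le_rfl y = init y := by
  rw [ngramProb, prod_eq_one fun l _ ↦ absurd (mem_Ico.mp l.2) (by omega), mul_one]

lemma ngramProb_block (hRT : R ≤ T) (j : ℕ) (x : ℕ → Fin d) :
    ngramProb d n R T r pk init hRT (block T j x) =
      init (block R j x) * ∏ l ∈ Ico R T, pk (fun k ↦ x (j + (l - r k))) (x (j + l)) :=
  congrArg (init (block R j x) * ·)
    (prod_attach (Ico R T) fun l ↦ pk (fun k ↦ x (j + (l - r k))) (x (j + l)))

lemma ngramProb_block_update (hrpos : ∀ k, 0 < r k) (hrR : ∀ k, r k ≤ R) (hRT : R ≤ T) (j : ℕ)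
    (x : ℕ → Fin d) (e : Fin d) :
    ngramProb d n R (T + 1) r pk init (hRT.trans T.le_succ)
        (block (T + 1) j (Function.update x (j + T) e)) =
      ngramProb d n R T r pk init hRT (block T j x) * pk (fun k ↦ x (j + T - r k)) e := by
  have hparents (k : Fin n) : Function.update x (j + T) e (j + (T - r k)) = x (j + T - r k) := by
    have := hrpos k
    have := hrR k
    rw [Nat.add_sub_assoc (by omega), Function.update_of_ne (by omega)]
  rw [ngramProb_block, prod_Ico_succ_top hRT, ← mul_assoc, ← ngramProb_block hRT, block_update]
  simp only [hparents, Function.update_self]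

/-- The expectation of `F` along the `n`-gram chain of length `T` started with law `init` at
position `j`; the coordinates outside the block `j, …, j + T - 1` are read off `x`. -/
noncomputable def ngramExp (r : Fin n → ℕ) (pk : (Fin n → Fin d) → Fin d → ℝ)
    (init : (Fin R → Fin d) → ℝ) (hRT : R ≤ T) (j : ℕ) (x : ℕ → Fin d)
    (F : (ℕ → Fin d) → ℝ) : ℝ :=
  ngramProb d n R T r pk init hRT ⬝ᵥ fun y ↦ F (overwrite j y x)

lemma ngramExp_comp_block (hRT : R ≤ T) (j : ℕ) (x : ℕ → Fin d) (φ : (Fin T → Fin d) → ℝ) :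
    ngramExp r pk init hRT j x (φ ∘ block T j) = ngramProb d n R T r pk init hRT ⬝ᵥ φ := by
  simp only [ngramExp, Function.comp_apply, block_overwrite]

lemma ngramExp_self (j : ℕ) (x : ℕ → Fin d) (F : (ℕ → Fin d) → ℝ) :
    ngramExp r pk init le_rfl j x F = init ⬝ᵥ fun Z ↦ F (overwrite j Z x) := by
  simp only [ngramExp, dotProduct, ngramProb_self]

lemma ngramExp_mono (hpk : ∀ Y e, 0 ≤ pk Y e) (hinit : ∀ Z, 0 ≤ init Z) (hRT : R ≤ T) (j : ℕ)
    (x : ℕ → Fin d) {F G : (ℕ → Fin d) → ℝ} (hFG : ∀ z, F z ≤ G z) :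
    ngramExp r pk init hRT j x F ≤ ngramExp r pk init hRT j x G :=
  sum_le_sum fun y _ ↦
    mul_le_mul_of_nonneg_left (hFG _) (ngramProb_nonneg hpk hinit hRT y)

lemma ngramExp_sum {W : Type*} [Fintype W] (hRT : R ≤ T) (j : ℕ) (x : ℕ → Fin d)
    (F : W → (ℕ → Fin d) → ℝ) :
    ngramExp r pk init hRT j x (∑ w, F w) = ∑ w, ngramExp r pk init hRT j x (F w) := by
  simp only [ngramExp, dotProduct, Finset.sum_apply, mul_sum]
  exact sum_comm

lemma ngramExp_succ (hrpos : ∀ k, 0 < r k) (hrR : ∀ k, r k ≤ R) (hRT : R ≤ T) (j : ℕ)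
    (x : ℕ → Fin d) (F : (ℕ → Fin d) → ℝ) :
    ngramExp r pk init (hRT.trans T.le_succ) j x F =
      ngramExp r pk init hRT j x (resampleAt r pk (j + T) F) := by
  have hterm (y : Fin T → Fin d) (e : Fin d) :
      ngramProb d n R (T + 1) r pk init (hRT.trans T.le_succ) (Fin.snoc y e) =
        ngramProb d n R T r pk init hRT y * pk (fun k ↦ overwrite j y x (j + T - r k)) e := by
    rw [← block_overwrite j (Fin.snoc y e : Fin (T + 1) → Fin d) x, overwrite_snoc,
      ngramProb_block_update hrpos hrR hRT, block_overwrite]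
  simp only [ngramExp, dotProduct, resampleAt, mul_sum]
  rw [← (Fin.snocEquiv fun _ ↦ Fin d).sum_comp, Fintype.sum_prod_type, sum_comm]
  refine sum_congr rfl fun y _ ↦ sum_congr rfl fun e _ ↦ ?_
  change ngramProb d n R (T + 1) r pk init _ (Fin.snoc y e) *
    F (overwrite j (Fin.snoc y e : Fin (T + 1) → Fin d) x) = _
  rw [hterm, overwrite_snoc, mul_assoc]

lemma ngramExp_eq_ngramExp_resample (hrpos : ∀ k, 0 < r k) (hrR : ∀ k, r k ≤ R) (hRT : R ≤ T)
    (hTT' : T ≤ T') (j : ℕ) (x : ℕ → Fin d) (F : (ℕ → Fin d) → ℝ) :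
    ngramExp r pk init (hRT.trans hTT') j x F =
      ngramExp r pk init hRT j x (resample r pk (j + T) (T' - T) F) := by
  induction T', hTT' using Nat.le_induction generalizing F with
  | base => rw [Nat.sub_self, resample]
  | succ T' hTT' ih =>
    rw [ngramExp_succ hrpos hrR (hRT.trans hTT'), ih, Nat.succ_sub hTT', resample, add_assoc,
      Nat.add_sub_cancel' hTT']

lemma sum_ngramProb [Nonempty (Fin d)] (hpk : ∀ Y, ∑ e, pk Y e = 1) (hrpos : ∀ k, 0 < r k)
    (hrR : ∀ k, r k ≤ R) (hRT : R ≤ T) :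
    ∑ y, ngramProb d n R T r pk init hRT y = ∑ Z, init Z := by
  have x : ℕ → Fin d := Classical.arbitrary _
  have h := ngramExp_eq_ngramExp_resample (pk := pk) (init := init) hrpos hrR le_rfl hRT 0 x 1
  rw [resample_of_dependsOn hpk (fun _ _ _ ↦ rfl), ngramExp_self] at h
  simpa only [ngramExp, Pi.one_apply, dotProduct, mul_one] using h

/-- The conditional expectation of `φ` of a block of length `T` given its first `R` symbols. -/
noncomputable def condMean (r : Fin n → ℕ) (pk : (Fin n → Fin d) → Fin d → ℝ) (hRT : R ≤ T)
    (φ : (Fin T → Fin d) → ℝ) (Z : Fin R → Fin d) : ℝ :=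
  ngramProb d n R T r pk (Pi.single Z 1) hRT ⬝ᵥ φ

lemma condMean_self (φ : (Fin R → Fin d) → ℝ) : condMean r pk le_rfl φ = φ := by
  ext Z
  rw [condMean, show ngramProb d n R R r pk (Pi.single Z 1) le_rfl = Pi.single Z 1 from
    funext ngramProb_self, single_one_dotProduct]

lemma dotProduct_condMean (hRT : R ≤ T) (φ : (Fin T → Fin d) → ℝ) :
    init ⬝ᵥ condMean r pk hRT φ = ngramProb d n R T r pk init hRT ⬝ᵥ φ := by
  simp only [condMean, dotProduct, ngramProb, mul_sum]
  rw [sum_comm]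
  refine sum_congr rfl fun y _ ↦ ?_
  simp only [Pi.single_apply, ite_mul, one_mul, zero_mul, mul_ite, mul_zero, sum_ite_eq, mem_univ,
    if_true, mul_assoc]

lemma condMean_sq_le (hpk0 : ∀ Y e, 0 ≤ pk Y e) (hpk1 : ∀ Y, ∑ e, pk Y e = 1) (hR : 0 < R)
    (hrpos : ∀ k, 0 < r k) (hrR : ∀ k, r k ≤ R) (hRT : R ≤ T) (φ : (Fin T → Fin d) → ℝ) :
    condMean r pk hRT φ ^ 2 ≤ condMean r pk hRT (φ ^ 2) := fun Z ↦ by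
  have : Nonempty (Fin d) := ⟨Z ⟨0, hR⟩⟩
  have hsingle : 0 ≤ (Pi.single Z 1 : (Fin R → Fin d) → ℝ) := Pi.single_nonneg.mpr zero_le_one
  refine dotProduct_sq_le (ngramProb_nonneg hpk0 hsingle hRT) ?_
  rw [sum_ngramProb hpk1 hrpos hrR, Fintype.sum_pi_single']

lemma resample_comp_block_self (hrpos : ∀ k, 0 < r k) (hrR : ∀ k, r k ≤ R) (hRT : R ≤ T) (j : ℕ)
    (φ : (Fin T → Fin d) → ℝ) :
    resample r pk (j + R) (T - R) (φ ∘ block T j) = condMean r pk hRT φ ∘ block R j := by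
  ext x
  rw [Function.comp_apply, condMean, ← ngramExp_comp_block hRT j x φ,
    ngramExp_eq_ngramExp_resample hrpos hrR le_rfl hRT, ngramExp_self, single_one_dotProduct,
    overwrite_block]

lemma windowMatrix_eq_mapLaw (Z' Z : Fin R → Fin d) :
    windowMatrix d n R hR r hrpos pk Z' Z =
      mapLaw (pk fun k ↦ Z ⟨R - r k, Nat.sub_lt hR (hrpos k)⟩)
        (fun e ↦ Fin.tail (Fin.snoc Z e : Fin (R + 1) → Fin d)) Z' := by
  simp only [windowMatrix, of_apply, mapLaw, tail_snoc_eq_iff hR]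
  split_ifs with hshift <;> simp [hshift]

lemma windowMatrix_mem_colStochastic (hpk0 : ∀ Y e, 0 ≤ pk Y e) (hpk1 : ∀ Y, ∑ e, pk Y e = 1) :
    windowMatrix d n R hR r hrpos pk ∈ colStochastic ℝ (Fin R → Fin d) := by
  simp only [mem_colStochastic_iff_sum, windowMatrix_eq_mapLaw, sum_mapLaw]
  exact ⟨fun Z' Z ↦ mapLaw_nonneg (hpk0 _) _ _, fun Z ↦ hpk1 _⟩

lemma resampleAt_comp_block (hrR : ∀ k, r k ≤ R) (j : ℕ) (h : (Fin R → Fin d) → ℝ) :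
    resampleAt r pk (j + R) (h ∘ block R (j + 1)) =
      (h ᵥ* windowMatrix d n R hR r hrpos pk) ∘ block R j := by
  ext x
  simp only [Function.comp_apply, vecMul, windowMatrix_eq_mapLaw, dotProduct_comm h,
    mapLaw_dotProduct]
  simp only [resampleAt, dotProduct, Function.comp_apply, tail_snoc_block, block,
    Nat.add_sub_assoc (hrR _)]

lemma resample_comp_block_add (hrR : ∀ k, r k ≤ R) (j t : ℕ) (h : (Fin R → Fin d) → ℝ) :
    resample r pk (j + R) t (h ∘ block R (j + t)) =
      (h ᵥ* windowMatrix d n R hR r hrpos pk ^ t) ∘ block R j := by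
  induction t generalizing h with
  | zero => rw [pow_zero, vecMul_one, resample, add_zero]
  | succ t ih =>
    rw [resample, add_right_comm, ← add_assoc, resampleAt_comp_block hrR, ih, vecMul_vecMul,
      ← pow_succ']

theorem resample_comp_block (hpk1 : ∀ Y, ∑ e, pk Y e = 1) (hrR : ∀ k, r k ≤ R) (hRT : R ≤ T)
    {j t : ℕ} (hT' : j + t + T ≤ T') (φ : (Fin T → Fin d) → ℝ) :
    resample r pk (j + R) (T' - (j + R)) (φ ∘ block T (j + t)) =
      (condMean r pk hRT φ ᵥ* windowMatrix d n R hR r hrpos pk ^ t) ∘ block R j := by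
  have hlength : T' - (j + R) = t + ((T - R) + (T' - (j + t + T))) := by omega
  have hdep : DependsOn (φ ∘ block T (j + t)) (Set.Iio (j + R + t + (T - R))) :=
    dependsOn_comp_block (by omega) φ
  rw [hlength, resample_add, resample_add, resample_of_dependsOn hpk1 hdep, add_right_comm j R t,
    resample_comp_block_self hrpos hrR hRT, resample_comp_block_add hrR]

theorem ngramExp_mul_comp_block (hpk1 : ∀ Y, ∑ e, pk Y e = 1) (hrR : ∀ k, r k ≤ R)
    (hRT : R ≤ T) (hRT' : R ≤ T') {q t : ℕ} (hT' : q + t + T ≤ T') {G : (ℕ → Fin d) → ℝ}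
    (hG : DependsOn G (Set.Iio (q + R))) (φ : (Fin T → Fin d) → ℝ) (x : ℕ → Fin d) :
    ngramExp r pk init hRT' 0 x (G * φ ∘ block T (q + t)) =
      ngramExp r pk init hRT' 0 x
        (G * (condMean r pk hRT φ ᵥ* windowMatrix d n R hR r hrpos pk ^ t) ∘ block R q) := by
  have hexp (F : (ℕ → Fin d) → ℝ) := ngramExp_eq_ngramExp_resample (pk := pk) (init := init)
    hrpos hrR (Nat.le_add_left R q) (show q + R ≤ T' by omega) 0 x F
  rw [hexp, hexp, resample_mul_of_dependsOn (by simpa using hG),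
    resample_mul_of_dependsOn (by simpa using hG), zero_add,
    resample_comp_block hpk1 hrR hRT hT', resample_of_dependsOn hpk1]
  exact dependsOn_comp_block le_rfl _

lemma ngramExp_comp_block_eq_dotProduct (hpk1 : ∀ Y, ∑ e, pk Y e = 1) (hrR : ∀ k, r k ≤ R)
    (hRT' : R ≤ T') {q : ℕ} (hT' : q + R ≤ T') (h : (Fin R → Fin d) → ℝ) (x : ℕ → Fin d) :
    ngramExp r pk init hRT' 0 x (h ∘ block R q) =
      init ⬝ᵥ (h ᵥ* windowMatrix d n R hR r hrpos pk ^ q) := by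
  have hmean := resample_comp_block (hR := hR) (hrpos := hrpos) hpk1 hrR le_rfl
    (show 0 + q + R ≤ T' by omega) h
  rw [condMean_self, zero_add, zero_add] at hmean
  rw [ngramExp_eq_ngramExp_resample hrpos hrR le_rfl hRT', zero_add, hmean, ngramExp_comp_block]
  simp only [dotProduct, ngramProb_self]

end NGram

section CorrelationDecay

/-! ### Decay of correlations between windows -/

open Matrix
open scoped Matrix.Norms.L2Operator

variable {d n R T L : ℕ} {hR : 0 < R} {r : Fin n → ℕ} {hrpos : ∀ k, 0 < r k}
  {pk : (Fin n → Fin d) → Fin d → ℝ} {μ μ0 : (Fin R → Fin d) → ℝ} {hRT : R ≤ T}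
  {W : Type*} [Fintype W] [DecidableEq W] {ψ : (Fin T → Fin d) → W} {ν : W → ℝ}

lemma dotProduct_condMean_centredIndicator
    (hν : mapLaw (ngramProb d n R T r pk μ hRT) ψ = ν) (hν1 : ∑ w, ν w = 1) (w : W) :
    μ ⬝ᵥ condMean r pk hRT (centredIndicator ν w ∘ ψ) = 0 := by
  rw [dotProduct_condMean, ← mapLaw_dotProduct, hν, dotProduct_centredIndicator hν1]

lemma sum_dotProduct_condMean_centredIndicator_sq_le (hpk0 : ∀ Y e, 0 ≤ pk Y e)
    (hpk1 : ∀ Y, ∑ e, pk Y e = 1) (hR : 0 < R) (hrpos : ∀ k, 0 < r k) (hrR : ∀ k, r k ≤ R)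
    (hμ : ∀ Z, 0 ≤ μ Z) (hν : mapLaw (ngramProb d n R T r pk μ hRT) ψ = ν)
    (hν1 : ∑ w, ν w = 1) :
    ∑ w, μ ⬝ᵥ condMean r pk hRT (centredIndicator ν w ∘ ψ) ^ 2 ≤ 1 - ν ⬝ᵥ ν := by
  calc ∑ w, μ ⬝ᵥ condMean r pk hRT (centredIndicator ν w ∘ ψ) ^ 2
      ≤ ∑ w, μ ⬝ᵥ condMean r pk hRT ((centredIndicator ν w ∘ ψ) ^ 2) :=
        sum_le_sum fun w _ ↦ sum_le_sum fun Z _ ↦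
          mul_le_mul_of_nonneg_left (condMean_sq_le hpk0 hpk1 hR hrpos hrR hRT _ Z) (hμ Z)
    _ = ∑ w, ν ⬝ᵥ centredIndicator ν w ^ 2 := by
        refine sum_congr rfl fun w _ ↦ ?_
        rw [dotProduct_condMean, ← hν, mapLaw_dotProduct]
        rfl
    _ = ν ⬝ᵥ fun a ↦ corr ν a a := by
        simp only [dotProduct, corr_eq_sum_centredIndicator, mul_sum, Pi.pow_apply, ← sq]
        exact sum_comm
    _ = 1 - ν ⬝ᵥ ν := dotProduct_corr_self hν1

/-- By the Markov property the later block may be replaced by its conditional mean given the last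
`R` symbols `block R q` of the earlier one, whence the Cauchy–Schwarz inequality. -/
lemma ngramExp_corr_le (hpk0 : ∀ Y e, 0 ≤ pk Y e) (hpk1 : ∀ Y, ∑ e, pk Y e = 1)
    (hrR : ∀ k, r k ≤ R) (hμ0 : ∀ Z, 0 ≤ μ0 Z) (hν0 : ∀ w, 0 ≤ ν w) (hRL : R ≤ L) {q t i : ℕ}
    (hi : i + T = q + R) (ht : q + t + T ≤ L) (x : ℕ → Fin d) :
    ngramExp r pk μ0 hRL 0 x
        (fun z ↦ corr ν (ψ (block T i z)) (ψ (block T (q + t) z))) ≤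
      √(1 + ν ⬝ᵥ ν) *
        (μ0 ⬝ᵥ ((fun Z ↦ √(∑ w, (condMean r pk hRT (centredIndicator ν w ∘ ψ) ᵥ*
          windowMatrix d n R hR r hrpos pk ^ t) Z ^ 2)) ᵥ*
            windowMatrix d n R hR r hrpos pk ^ q)) := by
  set P := windowMatrix d n R hR r hrpos pk
  set g := fun w ↦ condMean r pk hRT (centredIndicator ν w ∘ ψ)
  set G : (Fin R → Fin d) → ℝ := fun Z ↦ √(∑ w, (g w ᵥ* P ^ t) Z ^ 2)
  have hcorr : (fun z ↦ corr ν (ψ (block T i z)) (ψ (block T (q + t) z))) =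
      ∑ w, (centredIndicator ν w ∘ ψ) ∘ block T i *
        (centredIndicator ν w ∘ ψ) ∘ block T (q + t) := by
    ext z
    simp only [corr_eq_sum_centredIndicator, Finset.sum_apply, Pi.mul_apply, Function.comp_apply]
  have hMarkov (w : W) := ngramExp_mul_comp_block (init := μ0) (hR := hR) (hrpos := hrpos) hpk1 hrR
    hRT hRL ht (dependsOn_comp_block hi.le (centredIndicator ν w ∘ ψ)) (centredIndicator ν w ∘ ψ) x
  have hCauchySchwarz (z : ℕ → Fin d) :
      (∑ w, (centredIndicator ν w ∘ ψ) ∘ block T i * (g w ᵥ* P ^ t) ∘ block R q) z ≤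
        (√(1 + ν ⬝ᵥ ν) • G) (block R q z) := by
    simp only [Finset.sum_apply, Pi.mul_apply, Function.comp_apply]
    refine (Real.sum_mul_le_sqrt_mul_sqrt _ _ _).trans ?_
    refine mul_le_mul_of_nonneg_right (Real.sqrt_le_sqrt ?_) (Real.sqrt_nonneg _)
    simpa only [corr_eq_sum_centredIndicator, ← sq] using
      corr_le hν0 (ψ (block T i z)) (ψ (block T i z))
  rw [hcorr, ngramExp_sum, sum_congr rfl fun w _ ↦ hMarkov w, ← ngramExp_sum]
  refine (ngramExp_mono hpk0 hμ0 hRL 0 x hCauchySchwarz).trans_eq ?_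
  refine (ngramExp_comp_block_eq_dotProduct (hR := hR) (hrpos := hrpos) hpk1 hrR hRL (by omega)
    _ x).trans ?_
  rw [smul_vecMul, dotProduct_smul, smul_eq_mul]

theorem ngramExp_corr_le_pow (hpk0 : ∀ Y e, 0 ≤ pk Y e) (hpk1 : ∀ Y, ∑ e, pk Y e = 1)
    (hrR : ∀ k, r k ≤ R) (hμ00 : ∀ Z, 0 ≤ μ0 Z) (hμ01 : ∑ Z, μ0 Z = 1) (hμ : ∀ Z, 0 < μ Z)
    (hμ1 : ∑ Z, μ Z = 1) (hstat : windowMatrix d n R hR r hrpos pk *ᵥ μ = μ) {lam : ℝ}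
    (hlam : lam ≤ 1) (hnorm : ‖specA d n R hR r hrpos pk μ‖ ≤ lam)
    (hν : mapLaw (ngramProb d n R T r pk μ hRT) ψ = ν) (hν1 : ∑ w, ν w = 1) (hRL : R ≤ L)
    {i j : ℕ} (hij : i + T ≤ j) (hj : j + T ≤ L) (x : ℕ → Fin d) :
    ngramExp r pk μ0 hRL 0 x (fun z ↦ corr ν (ψ (block T i z)) (ψ (block T j z))) ≤
      √(chiSq μ0 μ + 1) * lam ^ (j - (i + T)) := by
  have hlam0 : 0 ≤ lam := (norm_nonneg _).trans hnorm
  have hν0 (w : W) : 0 ≤ ν w :=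
    hν ▸ mapLaw_nonneg (ngramProb_nonneg hpk0 (fun Z ↦ (hμ Z).le) hRT) ψ w
  obtain ⟨q, hq⟩ : ∃ q, i + T = q + R := ⟨i + T - R, by omega⟩
  obtain ⟨t, rfl⟩ : ∃ t, j = q + t := ⟨j - q, by omega⟩
  have hvar : √(1 + ν ⬝ᵥ ν) * √(1 - ν ⬝ᵥ ν) ≤ 1 := by
    have hnonneg : 0 ≤ ν ⬝ᵥ ν := sum_nonneg fun w _ ↦ mul_self_nonneg (ν w)
    rw [← Real.sqrt_mul (by positivity), Real.sqrt_le_one]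
    nlinarith [sq_nonneg (ν ⬝ᵥ ν)]
  have hpow : lam ^ t ≤ lam ^ (q + t - (i + T)) := pow_le_pow_of_le_one hlam0 hlam (by omega)
  have hMarkov := ngramExp_corr_le (hR := hR) (hrpos := hrpos) (hRT := hRT) (ψ := ψ) hpk0 hpk1 hrR
    hμ00 hν0 hRL hq hj x
  have hcontract := initial_dotProduct_vecMul_sqrt_sum_sq_le
    (windowMatrix_mem_colStochastic hpk0 hpk1) hμ hμ1 hstat hnorm hμ01
    (dotProduct_condMean_centredIndicator hν hν1) q t
  have hvariance := sum_dotProduct_condMean_centredIndicator_sq_le hpk0 hpk1 hR hrpos hrR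
    (fun Z ↦ (hμ Z).le) hν hν1
  calc _ ≤ √(1 + ν ⬝ᵥ ν) * (√(chiSq μ0 μ + 1) * (lam ^ t * √(1 - ν ⬝ᵥ ν))) := by
        refine hMarkov.trans ?_
        gcongr
        refine hcontract.trans ?_
        gcongr
    _ = √(chiSq μ0 μ + 1) * lam ^ t * (√(1 + ν ⬝ᵥ ν) * √(1 - ν ⬝ᵥ ν)) := by ring
    _ ≤ √(chiSq μ0 μ + 1) * lam ^ t * 1 := by gcongr
    _ ≤ √(chiSq μ0 μ + 1) * lam ^ (q + t - (i + T)) := by rw [mul_one]; gcongr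

end CorrelationDecay

section ExpectedChiSq

/-! ### The expected chi-square divergence -/

open Matrix
open scoped Matrix.Norms.L2Operator

lemma ngramExp_corr_le_two {d n R T L : ℕ} {r : Fin n → ℕ} (hrpos : ∀ k, 0 < r k)
    (hrR : ∀ k, r k ≤ R) {pk : (Fin n → Fin d) → Fin d → ℝ} (hpk0 : ∀ Y e, 0 ≤ pk Y e)
    (hpk1 : ∀ Y, ∑ e, pk Y e = 1) {μ0 : (Fin R → Fin d) → ℝ} (hμ00 : ∀ Z, 0 ≤ μ0 Z)
    (hμ01 : ∑ Z, μ0 Z = 1) {W : Type*} [Fintype W] [DecidableEq W] {ψ : (Fin T → Fin d) → W}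
    {ν : W → ℝ} (hν0 : ∀ w, 0 ≤ ν w) (hν1 : ∑ w, ν w = 1) (hRL : R ≤ L) (i j : ℕ)
    (x : ℕ → Fin d) :
    ngramExp r pk μ0 hRL 0 x (fun z ↦ corr ν (ψ (block T i z)) (ψ (block T j z))) ≤ 2 := by
  have : Nonempty (Fin d) := ⟨x 0⟩
  have hcorr (a b : W) : corr ν a b ≤ 2 := by
    linarith [corr_le hν0 a b, dotProduct_self_le_one hν0 hν1]
  refine (ngramExp_mono hpk0 hμ00 hRL 0 x fun z ↦ hcorr _ _).trans_eq ?_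
  rw [ngramExp, dotProduct, ← sum_mul, sum_ngramProb hpk1 hrpos hrR, hμ01, one_mul]

theorem statement7_general {d n R T L : ℕ} {hR : 0 < R} {r : Fin n → ℕ} {hrpos : ∀ k, 0 < r k}
    (hrR : ∀ k, r k ≤ R) {pk : (Fin n → Fin d) → Fin d → ℝ} (hpk0 : ∀ Y e, 0 ≤ pk Y e)
    (hpk1 : ∀ Y, ∑ e, pk Y e = 1) {μ0 : (Fin R → Fin d) → ℝ} (hμ00 : ∀ Z, 0 ≤ μ0 Z)
    (hμ01 : ∑ Z, μ0 Z = 1) {μ : (Fin R → Fin d) → ℝ} (hμ : ∀ Z, 0 < μ Z) (hμ1 : ∑ Z, μ Z = 1)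
    (hstat : windowMatrix d n R hR r hrpos pk *ᵥ μ = μ) {lam : ℝ} (hlam : lam < 1)
    (hnorm : ‖specA d n R hR r hrpos pk μ‖ ≤ lam) (hRT : R ≤ T) (hRL : R ≤ L)
    {W : Type*} [Fintype W] [DecidableEq W] (ψ : (Fin T → Fin d) → W) {m : ℝ} (hm : 0 < m)
    (hν : ∀ w, m ≤ mapLaw (ngramProb d n R T r pk μ hRT) ψ w) {ι : Type*} [Fintype ι]
    [Nonempty ι] {a : ι → ℕ} (ha : Function.Injective a) (haL : ∀ i, a i + T ≤ L) :
    ngramProb d n R L r pk μ0 hRL ⬝ᵥ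
        (fun x ↦ chiSq
          (empiricalLaw fun i ↦ ψ fun k ↦ x ⟨a i + k, by have := haL i; omega⟩)
          (mapLaw (ngramProb d n R T r pk μ hRT) ψ)) ≤
      2 * (T * 2 + √(chiSq μ0 μ + 1) * (1 - lam)⁻¹) / (Fintype.card ι * m) := by
  set ν := mapLaw (ngramProb d n R T r pk μ hRT) ψ with hνdef
  obtain ⟨Z, -⟩ := exists_ne_zero_of_sum_ne_zero (hμ1.trans_ne one_ne_zero)
  set x : ℕ → Fin d := fun _ ↦ Z ⟨0, hR⟩
  have : Nonempty (Fin d) := ⟨x 0⟩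
  have hν1 : ∑ w, ν w = 1 := by rw [hνdef, sum_mapLaw, sum_ngramProb hpk1 hrpos hrR, hμ1]
  have hpairs : ∑ i, ∑ j, ngramExp r pk μ0 hRL 0 x
      (fun z ↦ corr ν (ψ (block T (a i) z)) (ψ (block T (a j) z))) ≤
      Fintype.card ι * (2 * (T * 2 + √(chiSq μ0 μ + 1) * (1 - lam)⁻¹)) :=
    sum_sum_le_of_decay ha ((norm_nonneg _).trans hnorm) hlam zero_le_two (Real.sqrt_nonneg _)
      (fun i j ↦ by simp only [corr_comm])
      (fun i j ↦ ngramExp_corr_le_two hrpos hrR hpk0 hpk1 hμ00 hμ01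
        (fun w ↦ hm.le.trans (hν w)) hν1 hRL (a i) (a j) x)
      (fun i j hij ↦ ngramExp_corr_le_pow hpk0 hpk1 hrR hμ00 hμ01 hμ hμ1 hstat hlam.le hnorm
        hνdef.symm hν1 hRL hij (haL j) x)
  have hblock (i : ι) (y : Fin L → Fin d) := block_overwrite_zero (haL i) y x
  simp only [← hblock]
  calc _ ≤ (m * Fintype.card ι ^ 2)⁻¹ * _ := dotProduct_chiSq_empiricalLaw_le
        (ngramProb_nonneg hpk0 hμ00 hRL) hm hν fun i y ↦ ψ (block T (a i) (overwrite 0 y x))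
    _ ≤ _ := mul_le_mul_of_nonneg_left hpairs (by positivity)
    _ = _ := by field_simp

end ExpectedChiSq

lemma sub_add_succ_le {M L : ℕ} (l : {l // l ∈ Ico M L}) : l.1 - M + (M + 1) ≤ L + 1 := by
  have := mem_Ico.mp l.2
  omega

lemma sub_left_injective_Ico (M L : ℕ) :
    Function.Injective fun l : {l // l ∈ Ico M L} ↦ l.1 - M := fun l l' h ↦
  Subtype.ext ((tsub_left_inj (mem_Ico.mp l.2).1 (mem_Ico.mp l'.2).1).mp h)

lemma window_eq_window_block {d M L : ℕ} {S : Finset ℕ} (hS : ∀ s ∈ S, s ≤ M)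
    (x : Fin (L + 1) → Fin d) (l : {l // l ∈ Ico M L}) :
    window d (L + 1) S x l (icoLtSucc l) =
      window d (M + 1) S (fun k ↦ x ⟨l - M + k, by have := sub_add_succ_le l; omega⟩) M
        (Nat.lt_succ_self M) := by
  have hl := mem_Ico.mp l.2
  refine Prod.ext ?_ (funext fun s ↦ ?_)
  · simp only [window, Nat.sub_add_cancel hl.1]
  · simp only [window, parents, ← Nat.sub_add_comm hl.1, ← Nat.add_sub_assoc (hS s s.2)]
    congr 2; omega

lemma empirical_window_eq_empiricalLaw {d M L : ℕ} (hML : M ≤ L) {S : Finset ℕ}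
    (hS : ∀ s ∈ S, s ≤ M) (x : Fin (L + 1) → Fin d) :
    (fun w ↦ (∑ l ∈ (Ico M L).attach, if window d (L + 1) S x l (icoLtSucc l) = w then (1 : ℝ)
        else 0) / ((L : ℝ) - M)) =
      empiricalLaw fun l : {l // l ∈ Ico M L} ↦
        window d (M + 1) S (fun k ↦ x ⟨l - M + k, by have := sub_add_succ_le l; omega⟩) M
          (Nat.lt_succ_self M) := by
  ext w
  simp only [empiricalLaw, window_eq_window_block hS, univ_eq_attach, Fintype.card_coe,
    Nat.card_Ico, Nat.cast_sub hML]

lemma bound_le_of_two_mul_le {M L : ℕ} (hM : 1 ≤ M) (hML : 2 * M ≤ L) {m A C : ℝ} (hm : 0 < m)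
    (hA : 0 ≤ A) (hC : 0 ≤ C) :
    2 * ((M + 1 : ℕ) * 2 + C * A) / ((L - M : ℕ) * m) ≤ (4 * A * C + 16 * M) / (L * m) := by
  have hM' : (1 : ℝ) ≤ M := mod_cast hM
  have hML' : 2 * (M : ℝ) ≤ L := mod_cast hML
  have hhalf : L * m / 2 ≤ (L - M : ℕ) * m := by
    rw [Nat.cast_sub (by omega)]
    nlinarith
  have hLm : 0 < (L : ℝ) * m := mul_pos (by linarith) hm
  calc _ ≤ 2 * ((M + 1 : ℕ) * 2 + C * A) / (L * m / 2) := by gcongr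
    _ = (4 * A * C + 8 * (M + 1)) / (L * m) := by
      push_cast
      field_simp
      ring
    _ ≤ _ := by
      refine div_le_div_of_nonneg_right ?_ hLm.le
      linarith

/-- The expected χ²-divergence of the empirical distribution of windows
`Y_{M+1},…,Y_L` from the stationary window marginal `ν` is at most
`(4(1−λ)⁻¹√(D₀+1) + 16M)/(L·min ν)`. -/
theorem statement7
    (d n R M L : ℕ) (hd : 0 < d) (hn : 0 < n) (hR : 0 < R)
    (r : Fin n → ℕ) (hrpos : ∀ i, 0 < r i) (hrmono : StrictMono r)
    (hrR : ∀ i, r i ≤ R) (hRmax : ∃ i, r i = R)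
    (pk : (Fin n → Fin d) → Fin d → ℝ)
    (hpk0 : ∀ Y e, 0 ≤ pk Y e) (hpk1 : ∀ Y, ∑ e, pk Y e = 1)
    (μ0 : (Fin R → Fin d) → ℝ) (hμ00 : ∀ Z, 0 ≤ μ0 Z) (hμ01 : ∑ Z, μ0 Z = 1)
    (μ : (Fin R → Fin d) → ℝ) (hμpos : ∀ Z, 0 < μ Z) (hμ1 : ∑ Z, μ Z = 1)
    (hstat : ∀ Z', μ Z' = ∑ Z, windowMatrix d n R hR r hrpos pk Z' Z * μ Z)
    (lam : ℝ) (hlam0 : 0 ≤ lam) (hlam1 : lam < 1)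
    (hop : ∀ v : (Fin R → Fin d) → ℝ,
      Real.sqrt (∑ Z', Matrix.mulVec (specA d n R hR r hrpos pk μ) v Z' ^ 2)
        ≤ lam * Real.sqrt (∑ Z, v Z ^ 2))
    (hRM : R ≤ M) (hML : 2 * M ≤ L)
    (S : Finset ℕ) (hS : ∀ s ∈ S, 1 ≤ s ∧ s ≤ M)
    (m : ℝ) (hm0 : 0 < m)
    (hmle : ∀ w, m ≤ windowLaw d (M + 1) S (ngramProb d n R (M + 1) r pk μ (by omega)) M
        (Nat.lt_succ_self M) w)
    (hmmem : ∃ w, windowLaw d (M + 1) S (ngramProb d n R (M + 1) r pk μ (by omega)) M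
        (Nat.lt_succ_self M) w = m) :
    ∑ x : Fin (L + 1) → Fin d,
        ngramProb d n R (L + 1) r pk μ0 (by omega) x *
          chiSq
            (fun w =>
              (∑ l ∈ (Finset.Ico M L).attach,
                  if window d (L + 1) S x l.1 (icoLtSucc l) = w then (1 : ℝ) else 0) /
                ((L : ℝ) - M))
            (windowLaw d (M + 1) S (ngramProb d n R (M + 1) r pk μ (by omega)) M
              (Nat.lt_succ_self M))
      ≤ (4 * (1 - lam)⁻¹ * Real.sqrt (chiSq μ0 μ + 1) + 16 * M) / (L * m) := by
  have : Nonempty {l // l ∈ Ico M L} := (nonempty_Ico.mpr (by omega)).to_subtype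
  simp only [empirical_window_eq_empiricalLaw (show M ≤ L by omega) fun s hs ↦ (hS s hs).2]
  refine (statement7_general hrR hpk0 hpk1 hμ00 hμ01 hμpos hμ1 (funext hstat).symm hlam1
    (l2_opNorm_le_of_sqrt_sum_sq_le hlam0 hop) (by omega) (by omega)
    (fun y ↦ window d (M + 1) S y M (Nat.lt_succ_self M)) hm0 hmle
    (sub_left_injective_Ico M L) sub_add_succ_le).trans ?_
  rw [Fintype.card_coe, Nat.card_Ico]
  exact bound_le_of_two_mul_le (by omega) hML hm0 (inv_nonneg.mpr (sub_nonneg.mpr hlam1.le))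
    (Real.sqrt_nonneg _)
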